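/- arXiv:1804.04447 — 7 statements merged into one kernel-verified Lean document; each statement's English description precedes it below -/
import Mathlib

section
/- Let n, N_t ∈ ℕ, m = n·N_t, Δt > 0, and let 𝒰 ⊆ ℝⁿ be open. Let y : 𝒰 → ℝ^m be continuously differentiable and let Ξ(u) ∈ ℝ^{m×m} be invertible matrices such that differentiating the constraint gives Ξ(u) y′(u) h = (1/Δt)(h, 0, …, 0)ᵀ for all h ∈ ℝⁿ (i.e. y′(u) = −Ξ(u)⁻¹ϒ with ϒ = −(1/Δt)[I; 0; …; 0]). Let z ∈ ℝ^{m_o}, u^b ∈ ℝⁿ, R ∈ ℝ^{m_o×m_o} and B ∈ ℝ^{n×n} symmetric positive definite, SH ∈ ℝ^{m_o×m}, μ, α, β > 0, and D, E ∈ ℝ^{(n−1)×n}. Define F(u,w) = ½(SH y(u) − z)ᵀ R⁻¹ (SH y(u) − z) + ½(u − u^b)ᵀ B⁻¹ (u − u^b) + (μ/2) wᵀw + α ∑_{i=1}^{n−1} |D_i u − w_i| + β ∑_{i=1}^{n−1} |E_i w|. If (ū, w̄) ∈ 𝒰 × ℝ^{n−1} is a local minimizer of F and p̄ ∈ ℝ^m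 is the (unique) solution of Ξ(ū)ᵀ p̄ = HᵀSᵀ R⁻¹ (SH y(ū) − z), then for all (u, w) ∈ ℝⁿ × ℝ^{n−1}: (B⁻¹(ū − u^b) + (1/Δt) p̄¹, u − ū) + (μ w̄, w − w̄) + α ∑_{i=1}^{n−1} |D_i u − w_i| − α ∑_{i=1}^{n−1} |D_i ū − w̄_i| + β ∑_{i=1}^{n−1} |E_i w| − β ∑_{i=1}^{n−1} |E_i w̄| ≥ 0, where p̄¹ ∈ ℝⁿ is the first time block of p̄. -/
open Matrix Finset

theorem aux_mulVec {ι κ : Type*} [Fintype ι] [Fintype κ] (M : Matrix κ ι ℝ)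
    {v : ℝ → ι → ℝ} {v' : ι → ℝ} {t : ℝ} (hv : HasDerivAt v v' t) :
    HasDerivAt (fun s => M *ᵥ v s) (M *ᵥ v') t := by
  rw [hasDerivAt_pi] at hv ⊢
  intro k
  simp only [Matrix.mulVec, dotProduct]
  exact HasDerivAt.fun_sum (fun i _ => (hv i).const_mul (M k i))

theorem aux_dot {ι : Type*} [Fintype ι]
    {v w : ℝ → ι → ℝ} {v' w' : ι → ℝ} {t : ℝ} (hv : HasDerivAt v v' t)
    (hw : HasDerivAt w w' t) :
    HasDerivAt (fun s => v s ⬝ᵥ w s) (v' ⬝ᵥ w t + v t ⬝ᵥ w') t := by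
  rw [hasDerivAt_pi] at hv hw
  simp only [dotProduct, ← Finset.sum_add_distrib]
  exact HasDerivAt.fun_sum (fun i _ => (hv i).mul (hw i))

theorem aux_quad {ι : Type*} [Fintype ι] (M : Matrix ι ι ℝ) (hM : Mᵀ = M)
    {v : ℝ → ι → ℝ} {v' : ι → ℝ} {t : ℝ} (hv : HasDerivAt v v' t) :
    HasDerivAt (fun s => (1 / 2) * (v s ⬝ᵥ (M *ᵥ v s))) ((M *ᵥ v t) ⬝ᵥ v') t := by
  have h := (aux_dot hv (aux_mulVec M hv)).const_mul (1 / 2 : ℝ)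
  have : v t ⬝ᵥ M *ᵥ v' = (M *ᵥ v t) ⬝ᵥ v' := by
    rw [Matrix.dotProduct_mulVec, ← Matrix.mulVec_transpose, hM]
  have e : (1 / 2 : ℝ) * (v' ⬝ᵥ M *ᵥ v t + v t ⬝ᵥ M *ᵥ v') = (M *ᵥ v t) ⬝ᵥ v' := by
    rw [this, dotProduct_comm v']
    ring
  rw [e] at h
  exact h

theorem aux_abs (a b t : ℝ) (h0 : 0 ≤ t) (h1 : t ≤ 1) :
    |a + t * (b - a)| ≤ |a| + t * (|b| - |a|) := by
  have : a + t * (b - a) = (1 - t) * a + t * b := by ring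
  rw [this]
  refine (abs_add_le _ _).trans ?_
  rw [abs_mul, abs_mul, abs_of_nonneg h0, abs_of_nonneg (sub_nonneg.2 h1)]
  apply le_of_eq; ring

theorem aux_sum {ι : Type*} [Fintype ι] (a b : ι → ℝ) (t : ℝ) (h0 : 0 ≤ t) (h1 : t ≤ 1) :
    ∑ i, |a i + t * (b i - a i)| ≤ ∑ i, |a i| + t * (∑ i, |b i| - ∑ i, |a i|) := by
  rw [← Finset.sum_sub_distrib, Finset.mul_sum, ← Finset.sum_add_distrib]
  exact Finset.sum_le_sum (fun i _ => aux_abs _ _ t h0 h1)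

theorem aux_deriv (φ : ℝ → ℝ) (c : ℝ) (h : HasDerivAt φ c 0)
    (hm : ∀ᶠ t in nhdsWithin (0 : ℝ) (Set.Ioi 0), φ 0 ≤ φ t) : 0 ≤ c := by
  have h2 := (hasDerivWithinAt_iff_tendsto_slope' (s := Set.Ioi (0:ℝ)) (by simp)).1
    h.hasDerivWithinAt
  refine ge_of_tendsto h2 ?_
  filter_upwards [hm, self_mem_nhdsWithin] with t ht ht0
  rw [slope_def_field]
  exact div_nonneg (sub_nonneg.2 ht) (by simpa using (le_of_lt ht0))


/-- First-order optimality (KKT) system for the TGV-regularized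
reduced data assimilation problem: if `(ū, w̄)` is a local minimizer of the
reduced objective `F` and `p̄` solves the adjoint equation
`Ξ(ū)ᵀ p̄ = (SH)ᵀ R⁻¹ (SH y(ū) − z)`, then the variational inequality holds. -/
theorem stmt_5 (n Nt mo : ℕ) (hNt : 0 < Nt) (Δt : ℝ) (hΔt : 0 < Δt)
    (𝒰 : Set (Fin n → ℝ)) (hopen : IsOpen 𝒰)
    (y : (Fin n → ℝ) → (Fin Nt × Fin n → ℝ)) (hy : ContDiffOn ℝ 1 y 𝒰)
    (Ξ : (Fin n → ℝ) → Matrix (Fin Nt × Fin n) (Fin Nt × Fin n) ℝ)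
    (hΞ : ∀ u ∈ 𝒰, IsUnit (Ξ u))
    (hconstr : ∀ u ∈ 𝒰, ∀ h : Fin n → ℝ,
      Ξ u *ᵥ (fderiv ℝ y u h) =
        fun ji : Fin Nt × Fin n => if (ji.1 : ℕ) = 0 then (1 / Δt) * h ji.2 else 0)
    (z : Fin mo → ℝ) (ub : Fin n → ℝ)
    (R : Matrix (Fin mo) (Fin mo) ℝ) (hR : R.PosDef)
    (B : Matrix (Fin n) (Fin n) ℝ) (hB : B.PosDef)
    (SH : Matrix (Fin mo) (Fin Nt × Fin n) ℝ)
    (μ α β : ℝ) (hμ : 0 < μ) (hα : 0 < α) (hβ : 0 < β)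
    (D : Matrix (Fin (n - 1)) (Fin n) ℝ) (E : Matrix (Fin (n - 1)) (Fin (n - 1)) ℝ)
    (F : (Fin n → ℝ) × (Fin (n - 1) → ℝ) → ℝ)
    (hF : ∀ u w, F (u, w) =
      (1 / 2) * ((SH *ᵥ y u - z) ⬝ᵥ (R⁻¹ *ᵥ (SH *ᵥ y u - z))) +
      (1 / 2) * ((u - ub) ⬝ᵥ (B⁻¹ *ᵥ (u - ub))) + (μ / 2) * (w ⬝ᵥ w) +
      α * ∑ i, |(D *ᵥ u) i - w i| + β * ∑ i, |(E *ᵥ w) i|)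
    (ubar : Fin n → ℝ) (wbar : Fin (n - 1) → ℝ) (hubar : ubar ∈ 𝒰)
    (hmin : IsLocalMin F (ubar, wbar))
    (pbar : Fin Nt × Fin n → ℝ)
    (hp : (Ξ ubar)ᵀ *ᵥ pbar = SHᵀ *ᵥ (R⁻¹ *ᵥ (SH *ᵥ y ubar - z))) :
    ∀ (u : Fin n → ℝ) (w : Fin (n - 1) → ℝ),
      0 ≤ ((B⁻¹ *ᵥ (ubar - ub)) +
            (1 / Δt) • (fun i : Fin n => pbar (⟨0, hNt⟩, i))) ⬝ᵥ (u - ubar) +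
          (μ • wbar) ⬝ᵥ (w - wbar) +
          α * ∑ i, |(D *ᵥ u) i - w i| - α * ∑ i, |(D *ᵥ ubar) i - wbar i| +
          β * ∑ i, |(E *ᵥ w) i| - β * ∑ i, |(E *ᵥ wbar) i| := by
  intro u w
  have hlin : ∀ {ι : Type} [Fintype ι] (a b : ι → ℝ),
      HasDerivAt (fun t : ℝ => a + t • (b - a)) (b - a) 0 := by
    intro ι _ a b
    have := ((hasDerivAt_id (0:ℝ)).smul_const (b - a)).const_add a
    simpa using this
  have hu := hlin ubar u
  have hw := hlin wbar w
  have hyd : HasFDerivAt y (fderiv ℝ y ubar) ubar :=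
    ((hy.differentiableOn (by simp)).differentiableAt (hopen.mem_nhds hubar)).hasFDerivAt
  have hyc : HasDerivAt (fun t : ℝ => y (ubar + t • (u - ubar)))
      (fderiv ℝ y ubar (u - ubar)) 0 := by
    refine HasFDerivAt.comp_hasDerivAt (x := (0:ℝ)) (l := y) ?_ hu
    simpa using hyd
  have hRs : (R⁻¹)ᵀ = R⁻¹ := by
    have := hR.isHermitian.inv
    simpa [Matrix.IsHermitian, Matrix.conjTranspose_eq_transpose_of_trivial] using this
  have hBs : (B⁻¹)ᵀ = B⁻¹ := by
    have := hB.isHermitian.inv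
    simpa [Matrix.IsHermitian, Matrix.conjTranspose_eq_transpose_of_trivial] using this
  have h1 := aux_quad R⁻¹ hRs ((aux_mulVec SH hyc).sub_const z)
  have h2 := aux_quad B⁻¹ hBs (hu.sub_const ub)
  have h3 := (aux_dot hw hw).const_mul (μ / 2)
  set C := α * (∑ i, |(D *ᵥ u) i - w i| - ∑ i, |(D *ᵥ ubar) i - wbar i|) +
    β * (∑ i, |(E *ᵥ w) i| - ∑ i, |(E *ᵥ wbar) i|) with hC
  have h4 := (hasDerivAt_id (0:ℝ)).mul_const C
  have key := aux_deriv _ _ (((h1.add h2).add h3).add h4) ?_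
  · simp only [zero_smul, add_zero, one_mul] at key
    have hadj : (R⁻¹ *ᵥ (SH *ᵥ y ubar - z)) ⬝ᵥ (SH *ᵥ (fderiv ℝ y ubar (u - ubar))) =
        ((1 / Δt) • (fun i : Fin n => pbar (⟨0, hNt⟩, i))) ⬝ᵥ (u - ubar) := by
      rw [Matrix.dotProduct_mulVec, ← Matrix.mulVec_transpose, ← hp,
        Matrix.mulVec_transpose, ← Matrix.dotProduct_mulVec, hconstr ubar hubar]
      simp only [dotProduct, Fintype.sum_prod_type]
      rw [Finset.sum_eq_single (⟨0, hNt⟩ : Fin Nt)]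
      · refine Finset.sum_congr rfl (fun i _ => ?_)
        simp
        ring
      · intro j _ hj
        have : (j : ℕ) ≠ 0 := fun h => hj (Fin.ext h)
        simp [this]
      · simp
    rw [hadj] at key
    rw [add_dotProduct, smul_dotProduct μ]
    rw [dotProduct_comm (w - wbar)] at key
    simp only [smul_eq_mul]
    linarith
  · have hcont : Filter.Tendsto (fun t : ℝ => (ubar + t • (u - ubar), wbar + t • (w - wbar)))
        (nhds 0) (nhds (ubar, wbar)) := by
      have := (hu.continuousAt.prodMk hw.continuousAt).tendsto
      simpa using this
    have hev := (hcont.eventually hmin).filter_mono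
      (nhdsWithin_le_nhds (s := Set.Ioi (0:ℝ)))
    filter_upwards [hev, Ioo_mem_nhdsGT (zero_lt_one' ℝ)] with t ht ht01
    rw [hF, hF] at ht
    have e1 := aux_sum (fun i => (D *ᵥ ubar) i - wbar i) (fun i => (D *ᵥ u) i - w i) t
      ht01.1.le ht01.2.le
    have e2 := aux_sum (E *ᵥ wbar) (E *ᵥ w) t ht01.1.le ht01.2.le
    have r1 : ∑ i, |(D *ᵥ (ubar + t • (u - ubar))) i - (wbar + t • (w - wbar)) i| =
        ∑ i, |((D *ᵥ ubar) i - wbar i) +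
          t * (((D *ᵥ u) i - w i) - ((D *ᵥ ubar) i - wbar i))| := by
      refine Finset.sum_congr rfl (fun i _ => ?_)
      congr 1
      simp only [Matrix.mulVec_add, Matrix.mulVec_smul, Matrix.mulVec_sub, Pi.add_apply,
        Pi.sub_apply, Pi.smul_apply, smul_eq_mul]
      ring
    have r2 : ∑ i, |(E *ᵥ (wbar + t • (w - wbar))) i| =
        ∑ i, |(E *ᵥ wbar) i + t * ((E *ᵥ w) i - (E *ᵥ wbar) i)| := by
      refine Finset.sum_congr rfl (fun i _ => ?_)
      congr 1
      simp only [Matrix.mulVec_add, Matrix.mulVec_smul, Matrix.mulVec_sub, Pi.add_apply,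
        Pi.sub_apply, Pi.smul_apply, smul_eq_mul]
    rw [r1, r2] at ht
    have e1' := mul_le_mul_of_nonneg_left e1 hα.le
    have e2' := mul_le_mul_of_nonneg_left e2 hβ.le
    simp only [Pi.add_apply, id, zero_smul, add_zero, zero_mul]
    rw [hC]
    linarith
end

section
/- For every γ ≥ 1, the Huber function H_γ : ℝ → ℝ satisfies 0 ≤ H_γ(t) ≤ |t| for all t ∈ ℝ, and for every fixed t ∈ ℝ, lim_{γ→∞} H_γ(t) = |t|. -/
/-- The C² Huber regularization `H_γ` of the absolute value function. -/
noncomputable def huber (γ t : ℝ) : ℝ :=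
  let l₁ := (1 / γ) * (1 - 1 / (2 * γ))
  let l₂ := (1 / γ) * (1 + 1 / (2 * γ))
  let F := 1 - (2 * γ + 1) ^ 2 / (8 * γ)
  let G := γ * (2 * γ + 1) / 2
  let C := -γ ^ 3 / 2
  let D := (γ / 2 - G / 2) * l₁ ^ 2 - F * l₁ - (C / 3) * l₁ ^ 3
  let C₁ := (γ / 2) * l₁ ^ 2 - l₂
  let K := F * (l₂ - l₁) + (G / 2) * (l₂ ^ 2 - l₁ ^ 2) + (C / 3) * (l₂ ^ 3 - l₁ ^ 3)
  if |t| ≤ l₁ then (γ / 2) * t ^ 2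
  else if |t| ≤ l₂ then F * |t| + (G / 2) * t ^ 2 + (C / 3) * |t| ^ 3 + D
  else |t| + C₁ + K

theorem huber_form (γ t : ℝ) (h : 1 ≤ γ) : huber γ t =
    if |t| ≤ γ⁻¹ - γ⁻¹ ^ 2 / 2 then (γ / 2) * |t| ^ 2
    else if |t| ≤ γ⁻¹ + γ⁻¹ ^ 2 / 2 then
      γ / 2 * (γ⁻¹ - γ⁻¹ ^ 2 / 2) ^ 2 + (|t| - (γ⁻¹ - γ⁻¹ ^ 2 / 2))
        - γ ^ 3 / 6 * ((γ⁻¹ ^ 2) ^ 3 - (γ⁻¹ + γ⁻¹ ^ 2 / 2 - |t|) ^ 3)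
    else |t| + (γ⁻¹ / 2 * (1 - γ⁻¹ / 2) ^ 2 - (γ⁻¹ - γ⁻¹ ^ 2 / 2) - γ⁻¹ ^ 3 / 6) := by
  have h0 : γ ≠ 0 := by positivity
  have e1 : (1 / γ) * (1 - 1 / (2 * γ)) = γ⁻¹ - γ⁻¹ ^ 2 / 2 := by field_simp
  have e2 : (1 / γ) * (1 + 1 / (2 * γ)) = γ⁻¹ + γ⁻¹ ^ 2 / 2 := by field_simp
  unfold huber
  simp only [e1, e2, ← sq_abs t]
  generalize |t| = a
  split_ifs
  · rfl
  · field_simp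
    ring
  · field_simp
    ring

/-- For every `γ ≥ 1` the Huber function satisfies
`0 ≤ H_γ(t) ≤ |t|`, and for each fixed `t`, `H_γ(t) → |t|` as `γ → ∞`. -/
theorem stmt_6 :
    (∀ γ : ℝ, 1 ≤ γ → ∀ t : ℝ, 0 ≤ huber γ t ∧ huber γ t ≤ |t|) ∧
    (∀ t : ℝ, Filter.Tendsto (fun γ : ℝ => huber γ t) Filter.atTop (nhds |t|)) := by
  constructor
  · intro γ h t
    rw [huber_form γ t h]
    have ha : 0 ≤ |t| := abs_nonneg t
    generalize |t| = a at *
    have h0 : 0 < γ := by linarith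
    obtain ⟨g, hg⟩ : ∃ g, g = γ⁻¹ := ⟨_, rfl⟩
    have hgp : 0 < g := by rw [hg]; positivity
    have hg1 : g ≤ 1 := by rw [hg]; exact inv_le_one_of_one_le₀ h
    have hgg : γ * g = 1 := by rw [hg]; field_simp
    rw [← hg]
    have hl : 0 ≤ g - g ^ 2 / 2 := by nlinarith
    have hq : γ / 2 * (g - g ^ 2 / 2) ^ 2 ≤ g - g ^ 2 / 2 := by
      have : γ * (g - g ^ 2 / 2) = 1 - g / 2 := by linear_combination (1 - g / 2) * hgg
      have : γ / 2 * (g - g ^ 2 / 2) ^ 2 = (1 - g / 2) / 2 * (g - g ^ 2 / 2) := by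
        rw [← this]; ring
      rw [this]; nlinarith
    have hq0 : 0 ≤ γ / 2 * (g - g ^ 2 / 2) ^ 2 := by positivity
    split_ifs with h1 h2
    · refine ⟨by positivity, ?_⟩
      have : γ * a ≤ 1 := by
        calc γ * a ≤ γ * g := by gcongr; nlinarith
          _ = 1 := hgg
      nlinarith
    · push Not at h1
      obtain ⟨s, hs⟩ : ∃ s, s = a - (g - g ^ 2 / 2) := ⟨_, rfl⟩
      have e : g + g ^ 2 / 2 - a = g ^ 2 - s := by rw [hs]; ring
      rw [e, ← hs]
      have hs0 : 0 ≤ s := by linarith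
      have hs1 : s ≤ g ^ 2 := by linarith
      have l1 : 0 ≤ (g ^ 2) ^ 3 - (g ^ 2 - s) ^ 3 :=
        sub_nonneg.2 (pow_le_pow_left₀ (by linarith) (by linarith) 3)
      have l2 : (g ^ 2) ^ 3 - (g ^ 2 - s) ^ 3 ≤ 3 * (g ^ 2) ^ 2 * s := by
        have : 0 ≤ s ^ 2 * (3 * g ^ 2 - s) := mul_nonneg (sq_nonneg s) (by nlinarith)
        nlinarith
      have l3 : γ ^ 3 / 6 * ((g ^ 2) ^ 3 - (g ^ 2 - s) ^ 3) ≤ s := by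
        calc _ ≤ γ ^ 3 / 6 * (3 * (g ^ 2) ^ 2 * s) := by gcongr
          _ = (γ * g) ^ 3 * g * s / 2 := by ring
          _ = g * s / 2 := by rw [hgg]; ring
          _ ≤ s := by nlinarith
      have l4 : 0 ≤ γ ^ 3 / 6 * ((g ^ 2) ^ 3 - (g ^ 2 - s) ^ 3) := by positivity
      constructor <;> linarith
    · push Not at h2
      have p3 : g ^ 3 ≤ g ^ 2 := by nlinarith [sq_nonneg g]
      have p0 : 0 ≤ g ^ 3 := by positivity
      have p2 : g ^ 2 ≤ g := by nlinarith
      constructor <;> nlinarith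
  · intro t
    by_cases ht : t = 0
    · subst ht
      refine tendsto_nhds_of_eventually_eq ?_
      filter_upwards [Filter.eventually_ge_atTop (1:ℝ)] with γ h
      rw [huber_form γ 0 h]
      have hgp : 0 < γ⁻¹ := by positivity
      have hg1 : γ⁻¹ ≤ 1 := inv_le_one_of_one_le₀ h
      rw [if_pos (by rw [abs_zero]; nlinarith)]
      simp
    · have hi := tendsto_inv_atTop_zero (𝕜 := ℝ)
      have c1 : Continuous (fun g : ℝ => g + g ^ 2 / 2) := by fun_prop
      have c2 : Continuous (fun g : ℝ => |t| + (g / 2 * (1 - g / 2) ^ 2 - (g - g ^ 2 / 2) - g ^ 3 / 6)) := by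
        fun_prop
      have t1 := (c1.tendsto 0).comp hi
      have t2 := (c2.tendsto 0).comp hi
      norm_num at t1 t2
      refine t2.congr' ?_
      filter_upwards [Filter.eventually_ge_atTop (1:ℝ), t1.eventually_lt_const (abs_pos.2 ht)] with γ h h'
      simp only [Function.comp] at h' ⊢
      have : 0 ≤ γ⁻¹ ^ 2 := by positivity
      rw [huber_form γ t h, if_neg (by linarith), if_neg (by linarith)]
end

section
/- For every γ ≥ 1, the Huber function H_γ : ℝ → ℝ is twice continuously differentiable on ℝ, its derivative h_γ satisfies |h_γ(t)| ≤ 1 for all t, and its second derivative satisfies 0 ≤ H_γ''(t) ≤ γ for all t. -/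
noncomputable def pp (x : ℝ) : ℝ := max x 0

lemma pp_cont : Continuous pp := by unfold pp; fun_prop

lemma pp_of_nonneg {x : ℝ} (h : 0 ≤ x) : pp x = x := max_eq_left h
lemma pp_of_nonpos {x : ℝ} (h : x ≤ 0) : pp x = 0 := max_eq_right h

lemma pp_deriv (n : ℕ) (x : ℝ) :
    HasDerivAt (fun y => pp y ^ (n + 2)) ((n + 2) * pp x ^ (n + 1)) x := by
  rcases lt_trichotomy x 0 with h | h | h
  · rw [pp_of_nonpos h.le]
    have : (fun y => pp y ^ (n + 2)) =ᶠ[nhds x] fun _ => (0 : ℝ) := by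
      filter_upwards [Iio_mem_nhds h] with y hy
      rw [pp_of_nonpos (le_of_lt hy)]; simp
    simpa using (hasDerivAt_const x (0 : ℝ)).congr_of_eventuallyEq this
  · subst h
    rw [pp_of_nonpos le_rfl, hasDerivAt_iff_isLittleO]
    simp only [pp_of_nonpos le_rfl, sub_zero, smul_eq_mul]
    simp only [ne_eq, Nat.add_eq_zero_iff, one_ne_zero, OfNat.ofNat_ne_zero, and_false, not_false_eq_true,
      zero_pow, mul_zero, sub_zero]
    have h1 : (fun y : ℝ => pp y ^ (n + 2)) =O[nhds 0] fun y : ℝ => y ^ (n + 2) := by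
      apply Asymptotics.isBigO_of_le
      intro y
      rw [norm_pow, norm_pow]
      apply pow_le_pow_left₀ (norm_nonneg _)
      rcases le_total y 0 with h | h
      · rw [pp_of_nonpos h]; simp
      · rw [pp_of_nonneg h]
    refine h1.trans_isLittleO ?_
    simpa using Asymptotics.isLittleO_pow_pow (𝕜 := ℝ) (m := 1) (n := n + 2) (by omega)
  · rw [pp_of_nonneg h.le]
    have : (fun y => pp y ^ (n + 2)) =ᶠ[nhds x] fun y => y ^ (n + 2) := by
      filter_upwards [Ioi_mem_nhds h] with y hy
      rw [pp_of_nonneg (le_of_lt hy)]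
    have h2 := (hasDerivAt_pow (n + 2) x).congr_of_eventuallyEq this
    simpa using h2

lemma pp_deriv_sub (n : ℕ) (l x : ℝ) :
    HasDerivAt (fun y => pp (y - l) ^ (n + 2)) ((n + 2) * pp (x - l) ^ (n + 1)) x := by
  have := (pp_deriv n (x - l)).comp x ((hasDerivAt_id x).sub_const l)
  simpa [Function.comp_def] using this

lemma pp_deriv_neg (n : ℕ) (l x : ℝ) :
    HasDerivAt (fun y => pp (-y - l) ^ (n + 2)) (-((n + 2) * pp (-x - l) ^ (n + 1))) x := by
  have := (pp_deriv n (-x - l)).comp x ((hasDerivAt_id x).neg.sub_const l)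
  simpa [Function.comp_def] using this

noncomputable def L1 (γ : ℝ) : ℝ := (1 / γ) * (1 - 1 / (2 * γ))
noncomputable def L2 (γ : ℝ) : ℝ := (1 / γ) * (1 + 1 / (2 * γ))

noncomputable def H0 (γ t : ℝ) : ℝ := γ / 2 * t ^ 2 - γ ^ 3 / 6 *
  (pp (t - L1 γ) ^ 3 - pp (t - L2 γ) ^ 3 + pp (-t - L1 γ) ^ 3 - pp (-t - L2 γ) ^ 3)
noncomputable def H1 (γ t : ℝ) : ℝ := γ * t - γ ^ 3 / 2 *
  (pp (t - L1 γ) ^ 2 - pp (t - L2 γ) ^ 2 - pp (-t - L1 γ) ^ 2 + pp (-t - L2 γ) ^ 2)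
noncomputable def H2 (γ t : ℝ) : ℝ := γ - γ ^ 3 *
  (pp (t - L1 γ) - pp (t - L2 γ) + pp (-t - L1 γ) - pp (-t - L2 γ))

lemma L1_pos {γ : ℝ} (hγ : 1 ≤ γ) : 0 < L1 γ := by
  have : 1 / (2 * γ) < 1 := by rw [div_lt_one (by positivity)]; linarith
  have h : 0 < 1 - 1 / (2 * γ) := by linarith
  unfold L1; positivity

lemma L_sub {γ : ℝ} (hγ : 1 ≤ γ) : γ ^ 3 * (L2 γ - L1 γ) = γ := by
  have : γ ≠ 0 := by positivity
  unfold L1 L2; field_simp; ring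

lemma L1_lt {γ : ℝ} (hγ : 1 ≤ γ) : L1 γ < L2 γ := by
  have h := L_sub hγ
  have : 0 < γ ^ 3 * (L2 γ - L1 γ) := by rw [h]; linarith
  have := pos_of_mul_pos_right this (by positivity)
  linarith

lemma H0_even (γ t : ℝ) : H0 γ (-t) = H0 γ t := by unfold H0; rw [neg_neg]; ring
lemma H1_odd (γ t : ℝ) : H1 γ (-t) = -H1 γ t := by unfold H1; rw [neg_neg]; ring
lemma H2_even (γ t : ℝ) : H2 γ (-t) = H2 γ t := by unfold H2; rw [neg_neg]; ring

lemma huber_eq {γ : ℝ} (hγ : 1 ≤ γ) : huber γ = H0 γ := by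
  have key : ∀ t, 0 ≤ t → huber γ t = H0 γ t := by
    intro t ht
    have h0 : γ ≠ 0 := by positivity
    have a := L1_pos hγ
    have b := L1_lt hγ
    unfold huber H0
    rw [← L1, ← L2]
    simp only [abs_of_nonneg ht]
    rw [pp_of_nonpos (x := -t - L1 γ) (by linarith), pp_of_nonpos (x := -t - L2 γ) (by linarith)]
    split_ifs with h1 h2
    · rw [pp_of_nonpos (x := t - L1 γ) (by linarith), pp_of_nonpos (x := t - L2 γ) (by linarith)]
      ring
    · rw [pp_of_nonneg (x := t - L1 γ) (by linarith), pp_of_nonpos (x := t - L2 γ) (by linarith)]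
      unfold L1; field_simp; ring
    · rw [pp_of_nonneg (x := t - L1 γ) (by linarith), pp_of_nonneg (x := t - L2 γ) (by linarith)]
      unfold L1 L2; field_simp; ring
  funext t
  rcases le_total 0 t with h | h
  · exact key t h
  · rw [← H0_even, ← key (-t) (by linarith)]
    simp [huber]

lemma H0_deriv (γ t : ℝ) : HasDerivAt (H0 γ) (H1 γ t) t := by
  have h := ((hasDerivAt_pow 2 t).const_mul (γ / 2)).sub
    (((((pp_deriv_sub 1 (L1 γ) t).sub (pp_deriv_sub 1 (L2 γ) t)).add
      (pp_deriv_neg 1 (L1 γ) t)).sub (pp_deriv_neg 1 (L2 γ) t)).const_mul (γ ^ 3 / 6))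
  refine HasDerivAt.congr_deriv (f' := _) h ?_
  unfold H1; norm_num; ring

lemma H1_deriv (γ t : ℝ) : HasDerivAt (H1 γ) (H2 γ t) t := by
  have h := ((hasDerivAt_id t).const_mul γ).sub
    (((((pp_deriv_sub 0 (L1 γ) t).sub (pp_deriv_sub 0 (L2 γ) t)).sub
      (pp_deriv_neg 0 (L1 γ) t)).add (pp_deriv_neg 0 (L2 γ) t)).const_mul (γ ^ 3 / 2))
  refine HasDerivAt.congr_deriv (f' := _) h ?_
  unfold H2; norm_num; ring

lemma H2_cont (γ : ℝ) : Continuous (H2 γ) := by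
  have := pp_cont
  unfold H2; fun_prop

lemma H2_bd {γ : ℝ} (hγ : 1 ≤ γ) (t : ℝ) : 0 ≤ H2 γ t ∧ H2 γ t ≤ γ := by
  have key : ∀ t, 0 ≤ t → 0 ≤ H2 γ t ∧ H2 γ t ≤ γ := by
    intro t ht
    have a := L1_pos hγ
    have b := L1_lt hγ
    have c := L_sub hγ
    have g : 0 < γ ^ 3 := by positivity
    unfold H2
    rw [pp_of_nonpos (x := -t - L1 γ) (by linarith), pp_of_nonpos (x := -t - L2 γ) (by linarith)]
    have h1 : 0 ≤ pp (t - L1 γ) - pp (t - L2 γ) ∧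
        pp (t - L1 γ) - pp (t - L2 γ) ≤ L2 γ - L1 γ := by
      unfold pp; grind
    constructor <;> nlinarith [mul_nonneg g.le h1.1, mul_le_mul_of_nonneg_left h1.2 g.le]
  rcases le_total 0 t with h | h
  · exact key t h
  · rw [← H2_even]; exact key (-t) (by linarith)

lemma H1_le {γ : ℝ} (hγ : 1 ≤ γ) (t : ℝ) : H1 γ t ≤ 1 := by
  have hm : Monotone (H1 γ) := monotone_of_deriv_nonneg
    (fun t => (H1_deriv γ t).differentiableAt)
    (fun t => by rw [(H1_deriv γ t).deriv]; exact (H2_bd hγ t).1)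
  refine (hm (le_max_left t (L2 γ))).trans (le_of_eq ?_)
  have hs := le_max_right t (L2 γ)
  generalize max t (L2 γ) = s at hs
  have a := L1_pos hγ
  have b := L1_lt hγ
  have h0 : γ ≠ 0 := by positivity
  unfold H1
  rw [pp_of_nonpos (x := -s - L1 γ) (by linarith), pp_of_nonpos (x := -s - L2 γ) (by linarith),
    pp_of_nonneg (x := s - L1 γ) (by linarith), pp_of_nonneg (x := s - L2 γ) (by linarith)]
  unfold L1 L2; field_simp; ring

theorem stmt_7 (γ : ℝ) (hγ : 1 ≤ γ) :
    ContDiff ℝ 2 (huber γ) ∧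
    (∀ t : ℝ, |deriv (huber γ) t| ≤ 1) ∧
    (∀ t : ℝ, 0 ≤ deriv (deriv (huber γ)) t ∧ deriv (deriv (huber γ)) t ≤ γ) := by
  have d1 : deriv (huber γ) = H1 γ := by
    rw [huber_eq hγ]; exact funext fun t => (H0_deriv γ t).deriv
  have d2 : deriv (H1 γ) = H2 γ := funext fun t => (H1_deriv γ t).deriv
  refine ⟨?_, ?_, ?_⟩
  · rw [show (2 : WithTop ℕ∞) = 1 + 1 by norm_num, contDiff_succ_iff_deriv]
    refine ⟨?_, by simp, ?_⟩
    · rw [huber_eq hγ]; exact fun t => (H0_deriv γ t).differentiableAt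
    · rw [d1, contDiff_one_iff_deriv, d2]
      exact ⟨fun t => (H1_deriv γ t).differentiableAt, H2_cont γ⟩
  · intro t
    rw [d1, abs_le]
    have := H1_le hγ (-t)
    rw [H1_odd] at this
    exact ⟨by linarith, H1_le hγ t⟩
  · rw [d1, d2]; exact H2_bd hγ
end

section
/- Let (γ_k) be a sequence with γ_k → ∞, and for each k let (y_k, u_k, w_k) be a global minimizer of the Huber-regularized objective J_{γ_k} over the feasible set {(y,u,w) : e(y,u) = 0}, where e is continuous and every feasible pair satisfies the a-priori bound ‖y‖ ≤ c₀(1 + ‖u‖) for a fixed constant c₀. Let (y*, u*, w*) be a global minimizer of the original objective J over the same feasible set. Assume B is symmetric positive definite, μ > 0, and that the Huber family (H_γ) consists of continuous functions with 0 ≤ H_γ(t) ≤ |t| for all t and H_γ → |·| uniformly on compact subsets of ℝ as γ → ∞. Then there exists a subsequence (y_{k_j}, u_{k_j}, w_{k_j}) converging to some (ȳ, ū, w̄) which is feasible, e(ȳ, ū) = 0, and which is itself a global minimizer of J over the feasible set. -/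
open Matrix Finset Filter

lemma aux_coer {n : ℕ} (M : Matrix (Fin n) (Fin n) ℝ) (hM : M.PosDef) :
    ∃ c : ℝ, 0 < c ∧ ∀ v : EuclideanSpace ℝ (Fin n),
      c * ‖v‖ ^ 2 ≤ v.ofLp ⬝ᵥ (M *ᵥ v.ofLp) := by
  have hcont : Continuous fun v : EuclideanSpace ℝ (Fin n) => v.ofLp ⬝ᵥ (M *ᵥ v.ofLp) := by
    fun_prop
  rcases (Metric.sphere (0 : EuclideanSpace ℝ (Fin n)) 1).eq_empty_or_nonempty with h | h
  · refine ⟨1, one_pos, fun v => ?_⟩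
    have : v = 0 := by
      by_contra hv
      have h1 : (‖v‖⁻¹ • v) ∈ Metric.sphere (0 : EuclideanSpace ℝ (Fin n)) 1 := by
        simp [norm_smul, hv]
      rw [h] at h1
      exact h1
    subst this
    simp
  · obtain ⟨x, hx, hmin⟩ := (isCompact_sphere (0 : EuclideanSpace ℝ (Fin n)) 1).exists_isMinOn h
      hcont.continuousOn
    have hx0 : x.ofLp ≠ 0 := by
      intro h0
      have : x = 0 := by ext i; simpa using congrFun h0 i
      subst this
      simp at hx
    refine ⟨x.ofLp ⬝ᵥ (M *ᵥ x.ofLp), by simpa using hM.dotProduct_mulVec_pos hx0, fun v => ?_⟩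
    by_cases hv : v = 0
    · subst hv; simp
    have h1 : (‖v‖⁻¹ • v) ∈ Metric.sphere (0 : EuclideanSpace ℝ (Fin n)) 1 := by
      simp [norm_smul, hv]
    have h2 := hmin h1
    simp only [Set.mem_ofPred_eq, WithLp.ofLp_smul, mulVec_smul, smul_dotProduct, dotProduct_smul,
      smul_eq_mul] at h2
    have hp : 0 < ‖v‖ := norm_pos_iff.mpr hv
    calc _ ≤ (‖v‖⁻¹ * (‖v‖⁻¹ * (v.ofLp ⬝ᵥ (M *ᵥ v.ofLp)))) * ‖v‖ ^ 2 := by gcongr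
      _ = _ := by field_simp

lemma aux_H (H : ℝ → ℝ → ℝ)
    (hHunif : ∀ K : Set ℝ, IsCompact K →
      TendstoUniformlyOn (fun γ t => H γ t) (fun t => |t|) atTop K)
    (g t : ℕ → ℝ) (hg : Tendsto g atTop atTop) (a : ℝ) (ht : Tendsto t atTop (nhds a)) :
    Tendsto (fun k => H (g k) (t k)) atTop (nhds |a|) := by
  have h1 := hHunif _ (isCompact_closedBall a 1)
  rw [Metric.tendstoUniformlyOn_iff] at h1
  have h2 : Tendsto (fun k => |t k|) atTop (nhds |a|) := ht.abs
  refine (tendsto_iff_of_dist ?_).1 h2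
  rw [Metric.tendsto_nhds]
  intro ε hε
  filter_upwards [hg.eventually (h1 ε hε), ht.eventually (Metric.closedBall_mem_nhds a one_pos)]
    with k hk hk2
  simpa [abs_abs] using hk _ hk2

/-- Consistency of the Huber regularization: along a sequence
`γ_k → ∞`, global minimizers of the Huber-regularized objectives `J_{γ_k}` over
the feasible set `{e(y,u) = 0}` admit a subsequence converging to a feasible
point which is a global minimizer of the original objective `J`. -/
theorem stmt_9 (n m mo : ℕ)
    (SH : Matrix (Fin mo) (Fin m) ℝ) (z : Fin mo → ℝ)
    (R : Matrix (Fin mo) (Fin mo) ℝ) (hR : R.PosDef)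
    (B : Matrix (Fin n) (Fin n) ℝ) (hB : B.PosDef)
    (μ α β : ℝ) (hμ : 0 < μ) (hα : 0 < α) (hβ : 0 < β)
    (ub : EuclideanSpace ℝ (Fin n))
    (D : Matrix (Fin (n - 1)) (Fin n) ℝ) (E : Matrix (Fin (n - 1)) (Fin (n - 1)) ℝ)
    (e : EuclideanSpace ℝ (Fin m) → EuclideanSpace ℝ (Fin n) → EuclideanSpace ℝ (Fin m))
    (he_cont : Continuous fun p : EuclideanSpace ℝ (Fin m) × EuclideanSpace ℝ (Fin n) =>
      e p.1 p.2)
    (c₀ : ℝ)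
    (hapriori : ∀ y u, e y u = 0 → ‖y‖ ≤ c₀ * (1 + ‖u‖))
    (H : ℝ → ℝ → ℝ)
    (hHcont : ∀ γ, Continuous (H γ))
    (hHbd : ∀ γ t, 0 ≤ H γ t ∧ H γ t ≤ |t|)
    (hHunif : ∀ K : Set ℝ, IsCompact K →
      TendstoUniformlyOn (fun γ t => H γ t) (fun t => |t|) atTop K)
    (J : EuclideanSpace ℝ (Fin m) × EuclideanSpace ℝ (Fin n) ×
      EuclideanSpace ℝ (Fin (n - 1)) → ℝ)
    (Jγ : ℝ → EuclideanSpace ℝ (Fin m) × EuclideanSpace ℝ (Fin n) ×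
      EuclideanSpace ℝ (Fin (n - 1)) → ℝ)
    (hJ : ∀ y u w, J (y, u, w) =
      (1 / 2) * ((SH *ᵥ y - z) ⬝ᵥ (R⁻¹ *ᵥ (SH *ᵥ y - z))) +
      (1 / 2) * ((u - ub) ⬝ᵥ (B⁻¹ *ᵥ (u - ub))) + (μ / 2) * (w ⬝ᵥ w) +
      α * ∑ i, |(D *ᵥ u) i - w i| + β * ∑ i, |(E *ᵥ w) i|)
    (hJγ : ∀ γ y u w, Jγ γ (y, u, w) =
      (1 / 2) * ((SH *ᵥ y - z) ⬝ᵥ (R⁻¹ *ᵥ (SH *ᵥ y - z))) +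
      (1 / 2) * ((u - ub) ⬝ᵥ (B⁻¹ *ᵥ (u - ub))) + (μ / 2) * (w ⬝ᵥ w) +
      α * ∑ i, H γ ((D *ᵥ u) i - w i) + β * ∑ i, H γ ((E *ᵥ w) i))
    (γseq : ℕ → ℝ) (hγseq : Tendsto γseq atTop atTop)
    (Y : ℕ → EuclideanSpace ℝ (Fin m)) (Uc : ℕ → EuclideanSpace ℝ (Fin n))
    (W : ℕ → EuclideanSpace ℝ (Fin (n - 1)))
    (hfeask : ∀ k, e (Y k) (Uc k) = 0)
    (hmink : ∀ k, ∀ y u w, e y u = 0 →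
      Jγ (γseq k) (Y k, Uc k, W k) ≤ Jγ (γseq k) (y, u, w))
    (ystar : EuclideanSpace ℝ (Fin m)) (ustar : EuclideanSpace ℝ (Fin n))
    (wstar : EuclideanSpace ℝ (Fin (n - 1)))
    (hfeastar : e ystar ustar = 0)
    (hminstar : ∀ y u w, e y u = 0 → J (ystar, ustar, wstar) ≤ J (y, u, w)) :
    ∃ φ : ℕ → ℕ, StrictMono φ ∧
      ∃ (ybar : EuclideanSpace ℝ (Fin m)) (ubar : EuclideanSpace ℝ (Fin n))
        (wbar : EuclideanSpace ℝ (Fin (n - 1))),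
        Tendsto (fun j => (Y (φ j), Uc (φ j), W (φ j))) atTop
          (nhds (ybar, ubar, wbar)) ∧
        e ybar ubar = 0 ∧
        ∀ y u w, e y u = 0 → J (ybar, ubar, wbar) ≤ J (y, u, w) := by
  obtain ⟨c, hc, hcB⟩ := aux_coer B⁻¹ hB.inv
  have hR0 : ∀ v : Fin mo → ℝ, 0 ≤ v ⬝ᵥ (R⁻¹ *ᵥ v) := fun v => by
    simpa using hR.inv.posSemidef.dotProduct_mulVec_nonneg v
  have hww : ∀ w : EuclideanSpace ℝ (Fin (n - 1)), w.ofLp ⬝ᵥ w.ofLp = ‖w‖ ^ 2 := fun w => by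
    rw [EuclideanSpace.real_norm_sq_eq]
    simp [dotProduct, pow_two]
  set Js := J (ystar, ustar, wstar) with hJs
  have hle : ∀ k, Jγ (γseq k) (Y k, Uc k, W k) ≤ Js := fun k => by
    refine (hmink k _ _ wstar hfeastar).trans ?_
    rw [hJs, hJ, hJγ]
    gcongr <;> exact (hHbd _ _).2
  have hlow : ∀ k, (1 / 2) * (c * ‖Uc k - ub‖ ^ 2) + (μ / 2) * ‖W k‖ ^ 2 ≤ Js := fun k => by
    refine le_trans ?_ (hle k)
    rw [hJγ, hww]
    have h1 := hR0 (SH *ᵥ (Y k).ofLp - z)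
    have h2 := hcB (Uc k - ub)
    have h3 : 0 ≤ α * ∑ i, H (γseq k) ((D *ᵥ (Uc k).ofLp) i - (W k) i) :=
      mul_nonneg hα.le (Finset.sum_nonneg fun i _ => (hHbd _ _).1)
    have h4 : 0 ≤ β * ∑ i, H (γseq k) ((E *ᵥ (W k).ofLp) i) :=
      mul_nonneg hβ.le (Finset.sum_nonneg fun i _ => (hHbd _ _).1)
    simp only [WithLp.ofLp_sub] at h2 ⊢
    linarith
  have hU : ∀ k, ‖Uc k‖ ≤ Real.sqrt (2 * Js / c) + ‖ub‖ := fun k => by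
    have h1 : ‖Uc k - ub‖ ≤ Real.sqrt (2 * Js / c) := by
      apply Real.le_sqrt_of_sq_le
      rw [le_div_iff₀ hc]
      have := hlow k
      have h2 : 0 ≤ (μ / 2) * ‖W k‖ ^ 2 := by positivity
      linarith
    have h2 := norm_add_le (Uc k - ub) ub
    rw [sub_add_cancel] at h2
    linarith
  have hW : ∀ k, ‖W k‖ ≤ Real.sqrt (2 * Js / μ) := fun k => by
    apply Real.le_sqrt_of_sq_le
    rw [le_div_iff₀ hμ]
    have := hlow k
    have h2 : 0 ≤ (1 / 2) * (c * ‖Uc k - ub‖ ^ 2) := by positivity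
    linarith
  set MU := Real.sqrt (2 * Js / c) + ‖ub‖
  set MW := Real.sqrt (2 * Js / μ)
  have hY : ∀ k, ‖Y k‖ ≤ |c₀| * (1 + MU) := fun k => by
    refine (hapriori _ _ (hfeask k)).trans ?_
    have := hU k
    gcongr
    exact le_abs_self c₀
  have hbdd : Bornology.IsBounded
      (Metric.closedBall (0 : EuclideanSpace ℝ (Fin m)) (|c₀| * (1 + MU)) ×ˢ
        (Metric.closedBall (0 : EuclideanSpace ℝ (Fin n)) MU ×ˢ
          Metric.closedBall (0 : EuclideanSpace ℝ (Fin (n - 1))) MW)) :=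
    Metric.isBounded_closedBall.prod (Metric.isBounded_closedBall.prod Metric.isBounded_closedBall)
  obtain ⟨⟨yb, u', wb⟩, -, φ, hφ, hlim⟩ := tendsto_subseq_of_bounded hbdd
    (x := fun k => (Y k, Uc k, W k)) (fun k => by
      simp only [Set.mem_prod, mem_closedBall_zero_iff]
      exact ⟨hY k, hU k, hW k⟩)
  have hy : Tendsto (fun j => Y (φ j)) atTop (nhds yb) := hlim.fst_nhds
  have hu : Tendsto (fun j => Uc (φ j)) atTop (nhds u') := hlim.snd_nhds.fst_nhds
  have hw : Tendsto (fun j => W (φ j)) atTop (nhds wb) := hlim.snd_nhds.snd_nhds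
  have hg : Tendsto (fun j => γseq (φ j)) atTop atTop := hγseq.comp hφ.tendsto_atTop
  refine ⟨φ, hφ, yb, u', wb, hlim, ?_, ?_⟩
  · have h1 := (he_cont.tendsto (yb, u')).comp (hy.prodMk_nhds hu)
    refine tendsto_nhds_unique h1 ?_
    simp [Function.comp_def, hfeask]
  · intro y u w hf
    refine le_trans ?_ (hminstar y u w hf)
    refine le_of_tendsto (x := atTop) (f := fun j => Jγ (γseq (φ j)) (Y (φ j), Uc (φ j), W (φ j))) ?_
      (Eventually.of_forall fun j => hle (φ j))
    simp only [hJγ, hJ]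
    have c1 : Continuous fun y : EuclideanSpace ℝ (Fin m) =>
      (SH *ᵥ y.ofLp - z) ⬝ᵥ (R⁻¹ *ᵥ (SH *ᵥ y.ofLp - z)) := by fun_prop
    have c2 : Continuous fun u : EuclideanSpace ℝ (Fin n) =>
      (u - ub).ofLp ⬝ᵥ (B⁻¹ *ᵥ (u - ub).ofLp) := by fun_prop
    have c3 : Continuous fun w : EuclideanSpace ℝ (Fin (n - 1)) => w.ofLp ⬝ᵥ w.ofLp := by
      fun_prop
    have c4 : ∀ i, Continuous fun p : EuclideanSpace ℝ (Fin n) × EuclideanSpace ℝ (Fin (n - 1)) =>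
      (D *ᵥ p.1.ofLp) i - p.2.ofLp i := fun i => by
        refine Continuous.sub ?_ (by fun_prop)
        have h : Continuous fun p : EuclideanSpace ℝ (Fin n) × EuclideanSpace ℝ (Fin (n - 1)) =>
          D *ᵥ p.1.ofLp := by fun_prop
        exact (continuous_apply i).comp h
    have c5 : ∀ i, Continuous fun w : EuclideanSpace ℝ (Fin (n - 1)) => (E *ᵥ w.ofLp) i :=
      fun i => by
        have h : Continuous fun w : EuclideanSpace ℝ (Fin (n - 1)) => E *ᵥ w.ofLp := by fun_prop
        exact (continuous_apply i).comp h
    refine Tendsto.add (Tendsto.add (Tendsto.add (Tendsto.add ?_ ?_) ?_) ?_) ?_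
    · exact ((c1.tendsto _).comp hy).const_mul _
    · exact ((c2.tendsto _).comp hu).const_mul _
    · exact ((c3.tendsto _).comp hw).const_mul _
    · exact (tendsto_finset_sum _ fun i _ => aux_H H hHunif _ _ hg _
        (((c4 i).tendsto (u', wb)).comp (hu.prodMk_nhds hw))).const_mul _
    · exact (tendsto_finset_sum _ fun i _ => aux_H H hHunif _ _ hg _
        (((c5 i).tendsto wb).comp hw)).const_mul _
end

section
/- Let γ ≥ 1 and let ζ ∈ ℝ and q ∈ ℝ be given. Define the scalar Q₁(ζ, q) as follows: if γ|ζ| ≥ 1 + 1/(2γ) set Q₁ = 1/|ζ| − (q/max{1,|q|})·(ζ/|ζ|²); if γ|ζ| ≤ 1 − 1/(2γ) set Q₁ = γ; and if |γ|ζ| − 1| ≤ 1/(2γ) set Q₁ = (1 − (γ/2)θ²)·[1/|ζ| − (q/max{1,|q|})·(ζ/|ζ|²)] + γ²θ·(ζ/|ζ|)², where θ = 1 − γ|ζ| + 1/(2γ). Then Q₁(ζ, q) ≥ 0. -/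
/-- Nonnegativity of the diagonal entries of the projected
primal-dual second-order matrix `Q₁`: for `γ ≥ 1`, `ζ, q ∈ ℝ`, the scalar
`Q₁(ζ,q)` defined piecewise over the three Huber regimes is nonnegative. -/
theorem stmt_13 (γ ζ q : ℝ) (hγ : 1 ≤ γ) (Q : ℝ)
    (hQ : Q = if 1 + 1 / (2 * γ) ≤ γ * |ζ| then
        1 / |ζ| - (q / max 1 |q|) * (ζ / |ζ| ^ 2)
      else if γ * |ζ| ≤ 1 - 1 / (2 * γ) then γ
      else
        (1 - (γ / 2) * (1 - γ * |ζ| + 1 / (2 * γ)) ^ 2) *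
          (1 / |ζ| - (q / max 1 |q|) * (ζ / |ζ| ^ 2)) +
        γ ^ 2 * (1 - γ * |ζ| + 1 / (2 * γ)) * (ζ / |ζ|) ^ 2) :
    0 ≤ Q := by
  have hb : 0 ≤ 1 / |ζ| - (q / max 1 |q|) * (ζ / |ζ| ^ 2) := by
    rcases eq_or_ne ζ 0 with h0 | h0
    · simp [h0]
    have hz : 0 < |ζ| := abs_pos.mpr h0
    have hm : 0 < max 1 |q| := lt_of_lt_of_le one_pos (le_max_left _ _)
    have hp : abs (q / max 1 |q|) ≤ 1 := by
      rw [abs_div, abs_of_pos hm, div_le_one hm]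
      exact le_max_right _ _
    have h1 : (q / max 1 |q|) * ζ ≤ |ζ| := by
      calc (q / max 1 |q|) * ζ ≤ abs ((q / max 1 |q|) * ζ) := le_abs_self _
        _ = abs (q / max 1 |q|) * |ζ| := abs_mul _ _
        _ ≤ 1 * |ζ| := mul_le_mul_of_nonneg_right hp hz.le
        _ = |ζ| := one_mul _
    have h2 : 1 / |ζ| - (q / max 1 |q|) * (ζ / |ζ| ^ 2)
        = (|ζ| - (q / max 1 |q|) * ζ) / |ζ| ^ 2 := by
      field_simp
    rw [h2]
    exact div_nonneg (sub_nonneg.mpr h1) (by positivity)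
  have hg : 0 < γ := by linarith
  rw [hQ]
  split_ifs with h1 h2
  · exact hb
  · exact hg.le
  · push Not at h1 h2
    have hθ0 : 0 ≤ 1 - γ * |ζ| + 1 / (2 * γ) := by linarith
    have he : 1 / (2 * γ) + 1 / (2 * γ) = 1 / γ := by
      field_simp
      norm_num
    have hθ1 : 1 - γ * |ζ| + 1 / (2 * γ) ≤ 1 / γ := by linarith
    generalize 1 - γ * |ζ| + 1 / (2 * γ) = θ at *
    have h3 : γ * θ ≤ 1 := by
      rw [le_div_iff₀ hg] at hθ1
      linarith
    have h4 : θ ≤ 1 := by nlinarith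
    have h5 : 0 ≤ 1 - γ / 2 * θ ^ 2 := by nlinarith [mul_nonneg hg.le hθ0]
    exact add_nonneg (mul_nonneg h5 hb) (by positivity)
end

section
/- Let n, m ∈ ℕ, γ > 0, Δt > 0, μ > 0, α, β ≥ 0, ρ > 0, C_Ψ > 0. Let B ∈ ℝ^{n×n} be symmetric positive definite, D, E ∈ ℝ^{(n−1)×n}, let Q₁, Q₂ ∈ ℝ^{(n−1)×(n−1)} be diagonal with diagonal entries in [0, γ], let Ψ ∈ ℝ^{m×m} be symmetric positive semidefinite with operator norm ‖Ψ‖ ≤ C_Ψ, let Ξ ∈ ℝ^{m×m} be invertible with ‖Ξ⁻¹‖ ≤ ρ, and let ϒ ∈ ℝ^{m×n} with ‖ϒ‖ ≤ 1/Δt. Define Π = [[B⁻¹ + α DᵀQ₁D + ϒᵀΞ⁻ᵀΨΞ⁻¹ϒ, −α DᵀQ₁], [−α Q₁D, μ I + α Q₁ + β EᵀQ₂E]]. Then with m₀ := min{λ_min(B⁻¹), μ} > 0 and M₀ := max{λ_max(B⁻¹) + 2αγ‖D‖² + ρ²C_Ψ/Δt², μ + 2αγ + βγ‖E‖²}, one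 has m₀ ‖q‖₂² ≤ qᵀ Π q ≤ M₀ ‖q‖₂² for every q ∈ ℝ^{2n−1}. -/
open Matrix

/-- The spectral (operator `ℓ²→ℓ²`) norm of a real matrix. -/
noncomputable def matOpNorm {k l : ℕ} (A : Matrix (Fin k) (Fin l) ℝ) : ℝ :=
  ‖LinearMap.toContinuousLinearMap (Matrix.toEuclideanLin A)‖

lemma aux_opnorm {k l : ℕ} (A : Matrix (Fin k) (Fin l) ℝ) (x : Fin l → ℝ) :
    (A *ᵥ x) ⬝ᵥ (A *ᵥ x) ≤ matOpNorm A ^ 2 * (x ⬝ᵥ x) := by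
  have h := (LinearMap.toContinuousLinearMap (Matrix.toEuclideanLin A)).le_opNorm (WithLp.toLp 2 x)
  have h2 := pow_le_pow_left₀ (norm_nonneg _) h 2
  rw [mul_pow, EuclideanSpace.real_norm_sq_eq, EuclideanSpace.real_norm_sq_eq] at h2
  simp only [dotProduct, ← pow_two]
  simpa [matOpNorm] using h2

lemma aux_opnorm' {k : ℕ} (A : Matrix (Fin k) (Fin k) ℝ) (x : Fin k → ℝ) :
    x ⬝ᵥ (A *ᵥ x) ≤ matOpNorm A * (x ⬝ᵥ x) := by
  have h := (LinearMap.toContinuousLinearMap (Matrix.toEuclideanLin A)).le_opNorm (WithLp.toLp 2 x)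
  have h2 := real_inner_le_norm (WithLp.toLp 2 (A *ᵥ x)) (WithLp.toLp 2 x)
  have h3 : x ⬝ᵥ x = ‖WithLp.toLp 2 x‖ ^ 2 := by
    rw [EuclideanSpace.real_norm_sq_eq]; simp only [dotProduct, ← pow_two]
  have h4 : inner ℝ (WithLp.toLp 2 (A *ᵥ x)) (WithLp.toLp 2 x) = x ⬝ᵥ (A *ᵥ x) := by
    simp [EuclideanSpace.inner_eq_star_dotProduct]
  rw [h4] at h2
  have h5 : ‖WithLp.toLp 2 (A *ᵥ x)‖ ≤ matOpNorm A * ‖WithLp.toLp 2 x‖ := h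
  rw [h3]
  nlinarith [norm_nonneg (WithLp.toLp 2 x)]

lemma aux_spec {n : ℕ} (A : Matrix (Fin n) (Fin n) ℝ) (hA : A.IsHermitian) (x : Fin n → ℝ) :
    ∃ w : Fin n → ℝ, x ⬝ᵥ x = ∑ i, w i ^ 2 ∧ x ⬝ᵥ (A *ᵥ x) = ∑ i, hA.eigenvalues i * w i ^ 2 := by
  set U : Matrix (Fin n) (Fin n) ℝ := hA.eigenvectorUnitary.1 with hU
  have h1 : U * Uᵀ = 1 := by
    have := Unitary.coe_mul_star_self hA.eigenvectorUnitary
    simpa [star_eq_conjTranspose] using this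
  have h2 : A = U * diagonal hA.eigenvalues * Uᵀ := by
    have := hA.spectral_theorem
    rw [Unitary.conjStarAlgAut_apply] at this
    simpa [star_eq_conjTranspose, Function.comp_def] using this
  refine ⟨Uᵀ *ᵥ x, ?_, ?_⟩
  · have : x ⬝ᵥ ((U * Uᵀ) *ᵥ x) = ∑ i, (Uᵀ *ᵥ x) i ^ 2 := by
      rw [← mulVec_mulVec, dotProduct_mulVec, ← mulVec_transpose]
      simp only [dotProduct, pow_two]
    rwa [h1, one_mulVec] at this
  · conv_lhs => rw [h2]
    rw [← mulVec_mulVec, ← mulVec_mulVec, dotProduct_mulVec, ← mulVec_transpose]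
    simp only [dotProduct, mulVec_diagonal]
    exact Finset.sum_congr rfl fun i _ => by ring

lemma aux_diag {k : ℕ} (d v : Fin k → ℝ) (γ : ℝ) (hd : ∀ i, d i ∈ Set.Icc 0 γ) :
    0 ≤ v ⬝ᵥ (diagonal d *ᵥ v) ∧ v ⬝ᵥ (diagonal d *ᵥ v) ≤ γ * (v ⬝ᵥ v) := by
  simp only [dotProduct, mulVec_diagonal, Finset.mul_sum]
  constructor
  · exact Finset.sum_nonneg fun i _ => by nlinarith [mul_nonneg (hd i).1 (mul_self_nonneg (v i))]
  · exact Finset.sum_le_sum fun i _ => by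
      nlinarith [mul_le_mul_of_nonneg_right (hd i).2 (mul_self_nonneg (v i))]

lemma aux_cong {k l : ℕ} (A : Matrix (Fin k) (Fin l) ℝ) (Q : Matrix (Fin k) (Fin k) ℝ)
    (x : Fin l → ℝ) : x ⬝ᵥ ((Aᵀ * Q * A) *ᵥ x) = (A *ᵥ x) ⬝ᵥ (Q *ᵥ (A *ᵥ x)) := by
  rw [← mulVec_mulVec, ← mulVec_mulVec, dotProduct_mulVec, vecMul_transpose]


/-- Uniform two-sided spectral bounds for the reduced Newton
matrix `Π`: `m₀‖q‖² ≤ qᵀΠq ≤ M₀‖q‖²` with `m₀ = min{λ_min(B⁻¹), μ} > 0` and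
`M₀ = max{λ_max(B⁻¹) + 2αγ‖D‖² + ρ²C_Ψ/Δt², μ + 2αγ + βγ‖E‖²}`. -/
theorem stmt_14 (n m : ℕ) (hn : 0 < n)
    (γ Δt μ α β ρ CΨ : ℝ) (hγ : 0 < γ) (hΔt : 0 < Δt) (hμ : 0 < μ)
    (hα : 0 ≤ α) (hβ : 0 ≤ β) (hρ : 0 < ρ) (hCΨ : 0 < CΨ)
    (B : Matrix (Fin n) (Fin n) ℝ) (hB : B.PosDef)
    (D : Matrix (Fin (n - 1)) (Fin n) ℝ) (E : Matrix (Fin (n - 1)) (Fin (n - 1)) ℝ)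
    (q₁ q₂ : Fin (n - 1) → ℝ)
    (hq₁ : ∀ i, q₁ i ∈ Set.Icc 0 γ) (hq₂ : ∀ i, q₂ i ∈ Set.Icc 0 γ)
    (Q₁ Q₂ : Matrix (Fin (n - 1)) (Fin (n - 1)) ℝ)
    (hQ₁ : Q₁ = Matrix.diagonal q₁) (hQ₂ : Q₂ = Matrix.diagonal q₂)
    (Ψ : Matrix (Fin m) (Fin m) ℝ) (hΨ : Ψ.PosSemidef) (hΨnorm : matOpNorm Ψ ≤ CΨ)
    (Ξ : Matrix (Fin m) (Fin m) ℝ) (hΞ : IsUnit Ξ.det) (hΞnorm : matOpNorm Ξ⁻¹ ≤ ρ)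
    (Υ : Matrix (Fin m) (Fin n) ℝ) (hΥnorm : matOpNorm Υ ≤ 1 / Δt)
    (P : Matrix (Fin n ⊕ Fin (n - 1)) (Fin n ⊕ Fin (n - 1)) ℝ)
    (hP : P = Matrix.fromBlocks
      (B⁻¹ + α • (Dᵀ * Q₁ * D) + Υᵀ * (Ξ⁻¹)ᵀ * Ψ * Ξ⁻¹ * Υ)
      (-(α • (Dᵀ * Q₁)))
      (-(α • (Q₁ * D)))
      (μ • (1 : Matrix (Fin (n - 1)) (Fin (n - 1)) ℝ) + α • Q₁ + β • (Eᵀ * Q₂ * E))) :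
    0 < min (Finset.univ.inf' (Finset.univ_nonempty_iff.mpr (Fin.pos_iff_nonempty.mp hn))
        hB.inv.1.eigenvalues) μ ∧
    ∀ q : EuclideanSpace ℝ (Fin n ⊕ Fin (n - 1)),
      min (Finset.univ.inf' (Finset.univ_nonempty_iff.mpr (Fin.pos_iff_nonempty.mp hn))
          hB.inv.1.eigenvalues) μ * ‖q‖ ^ 2 ≤ q ⬝ᵥ (P *ᵥ q) ∧
      q ⬝ᵥ (P *ᵥ q) ≤
        max ((Finset.univ.sup' (Finset.univ_nonempty_iff.mpr (Fin.pos_iff_nonempty.mp hn))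
            hB.inv.1.eigenvalues) + 2 * α * γ * matOpNorm D ^ 2 + ρ ^ 2 * CΨ / Δt ^ 2)
          (μ + 2 * α * γ + β * γ * matOpNorm E ^ 2) * ‖q‖ ^ 2 := by
  have hne : (Finset.univ : Finset (Fin n)).Nonempty :=
    Finset.univ_nonempty_iff.mpr (Fin.pos_iff_nonempty.mp hn)
  refine ⟨lt_min ((Finset.lt_inf'_iff _).2 fun i _ => hB.inv.eigenvalues_pos i) hμ, fun q => ?_⟩
  set lo := Finset.univ.inf' (Finset.univ_nonempty_iff.mpr (Fin.pos_iff_nonempty.mp hn))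
        hB.inv.1.eigenvalues with hlo
  set hi := Finset.univ.sup' (Finset.univ_nonempty_iff.mpr (Fin.pos_iff_nonempty.mp hn))
        hB.inv.1.eigenvalues with hhi
  set x : Fin n → ℝ := fun i => q (Sum.inl i) with hx
  set y : Fin (n - 1) → ℝ := fun i => q (Sum.inr i) with hy
  have hq : (q : Fin n ⊕ Fin (n - 1) → ℝ) = Sum.elim x y := by
    ext i; cases i <;> rfl
  have hnorm : ‖q‖ ^ 2 = x ⬝ᵥ x + y ⬝ᵥ y := by
    rw [EuclideanSpace.real_norm_sq_eq, Fintype.sum_sum_type]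
    simp only [dotProduct, pow_two, hx, hy]
  have hx0 : 0 ≤ x ⬝ᵥ x := Finset.sum_nonneg fun i _ => mul_self_nonneg _
  have hy0 : 0 ≤ y ⬝ᵥ y := Finset.sum_nonneg fun i _ => mul_self_nonneg _
  set z := Ξ⁻¹ *ᵥ (Υ *ᵥ x) with hz
  set d := D *ᵥ x with hd
  set e := E *ᵥ y with he
  have hT : x ⬝ᵥ ((Υᵀ * (Ξ⁻¹)ᵀ * Ψ * Ξ⁻¹ * Υ) *ᵥ x) = z ⬝ᵥ (Ψ *ᵥ z) := by
    have : Υᵀ * (Ξ⁻¹)ᵀ * Ψ * Ξ⁻¹ * Υ = (Ξ⁻¹ * Υ)ᵀ * Ψ * (Ξ⁻¹ * Υ) := by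
      rw [transpose_mul]; simp only [Matrix.mul_assoc]
    rw [this, aux_cong, ← mulVec_mulVec]
  have hsym : y ⬝ᵥ (Q₁ *ᵥ d) = d ⬝ᵥ (Q₁ *ᵥ y) := by
    rw [hQ₁]; simp only [dotProduct, mulVec_diagonal]
    exact Finset.sum_congr rfl fun i _ => by ring
  have hform : q ⬝ᵥ (P *ᵥ q) = x ⬝ᵥ (B⁻¹ *ᵥ x) + α * ((d - y) ⬝ᵥ (Q₁ *ᵥ (d - y)))
      + z ⬝ᵥ (Ψ *ᵥ z) + μ * (y ⬝ᵥ y) + β * (e ⬝ᵥ (Q₂ *ᵥ e)) := by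
    have h12 : x ⬝ᵥ ((Dᵀ * Q₁) *ᵥ y) = d ⬝ᵥ (Q₁ *ᵥ y) := by
      rw [← mulVec_mulVec, dotProduct_mulVec, vecMul_transpose]
    have h21 : y ⬝ᵥ ((Q₁ * D) *ᵥ x) = y ⬝ᵥ (Q₁ *ᵥ d) := by
      rw [← mulVec_mulVec]
    rw [hq, hP, fromBlocks_mulVec]
    simp only [Sum.elim_comp_inl, Sum.elim_comp_inr, sumElim_dotProduct_sumElim, add_mulVec,
      neg_mulVec, smul_mulVec, one_mulVec, dotProduct_add, dotProduct_neg, dotProduct_smul,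
      smul_eq_mul, hT, aux_cong, h12, h21, mulVec_sub, dotProduct_sub, sub_dotProduct, hsym]
    simp only [← hd, ← he]
    ring
  obtain ⟨w, hw1, hw2⟩ := aux_spec B⁻¹ hB.inv.1 x
  have hBlo : lo * (x ⬝ᵥ x) ≤ x ⬝ᵥ (B⁻¹ *ᵥ x) := by
    rw [hw1, hw2, Finset.mul_sum]
    exact Finset.sum_le_sum fun i _ => mul_le_mul_of_nonneg_right
      (Finset.inf'_le _ (Finset.mem_univ i)) (sq_nonneg _)
  have hBhi : x ⬝ᵥ (B⁻¹ *ᵥ x) ≤ hi * (x ⬝ᵥ x) := by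
    rw [hw1, hw2, Finset.mul_sum]
    exact Finset.sum_le_sum fun i _ => mul_le_mul_of_nonneg_right
      (Finset.le_sup' _ (Finset.mem_univ i)) (sq_nonneg _)
  have hΨ0 : 0 ≤ z ⬝ᵥ (Ψ *ᵥ z) := by simpa using hΨ.dotProduct_mulVec_nonneg z
  obtain ⟨h1a, h1b⟩ := aux_diag q₁ (d - y) γ hq₁
  obtain ⟨h2a, h2b⟩ := aux_diag q₂ e γ hq₂
  rw [← hQ₁] at h1a h1b
  rw [← hQ₂] at h2a h2b
  rw [hform, hnorm]
  constructor
  · have a1 := mul_le_mul_of_nonneg_right (min_le_left lo μ) hx0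
    have a2 := mul_le_mul_of_nonneg_right (min_le_right lo μ) hy0
    have a3 := mul_nonneg hα h1a
    have a4 := mul_nonneg hβ h2a
    linarith
  · have hdd : d ⬝ᵥ d ≤ matOpNorm D ^ 2 * (x ⬝ᵥ x) := aux_opnorm D x
    have hee : e ⬝ᵥ e ≤ matOpNorm E ^ 2 * (y ⬝ᵥ y) := aux_opnorm E y
    have hdy : (d - y) ⬝ᵥ (d - y) ≤ 2 * (d ⬝ᵥ d) + 2 * (y ⬝ᵥ y) := by
      simp only [dotProduct, Finset.mul_sum, ← Finset.sum_add_distrib]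
      exact Finset.sum_le_sum fun i _ => by
        simp only [Pi.sub_apply]; nlinarith [sq_nonneg (d i + y i)]
    have hΥ : (Υ *ᵥ x) ⬝ᵥ (Υ *ᵥ x) ≤ (1 / Δt) ^ 2 * (x ⬝ᵥ x) :=
      (aux_opnorm Υ x).trans (mul_le_mul_of_nonneg_right
        (pow_le_pow_left₀ (norm_nonneg _) hΥnorm 2) hx0)
    have hu0 : 0 ≤ (Υ *ᵥ x) ⬝ᵥ (Υ *ᵥ x) := Finset.sum_nonneg fun i _ => mul_self_nonneg _
    have hz0 : 0 ≤ z ⬝ᵥ z := Finset.sum_nonneg fun i _ => mul_self_nonneg _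
    have hzz : z ⬝ᵥ z ≤ ρ ^ 2 * ((Υ *ᵥ x) ⬝ᵥ (Υ *ᵥ x)) :=
      (aux_opnorm Ξ⁻¹ _).trans (mul_le_mul_of_nonneg_right
        (pow_le_pow_left₀ (norm_nonneg _) hΞnorm 2) hu0)
    have hΨz : z ⬝ᵥ (Ψ *ᵥ z) ≤ CΨ * (z ⬝ᵥ z) :=
      (aux_opnorm' Ψ z).trans (mul_le_mul_of_nonneg_right hΨnorm hz0)
    have hΨx : z ⬝ᵥ (Ψ *ᵥ z) ≤ ρ ^ 2 * CΨ / Δt ^ 2 * (x ⬝ᵥ x) := by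
      calc _ ≤ CΨ * (ρ ^ 2 * ((1 / Δt) ^ 2 * (x ⬝ᵥ x))) :=
            hΨz.trans (mul_le_mul_of_nonneg_left (hzz.trans
              (mul_le_mul_of_nonneg_left hΥ (sq_nonneg _))) hCΨ.le)
        _ = _ := by field_simp
    have b1 : α * ((d - y) ⬝ᵥ (Q₁ *ᵥ (d - y)))
        ≤ α * (γ * (2 * (matOpNorm D ^ 2 * (x ⬝ᵥ x)) + 2 * (y ⬝ᵥ y))) :=
      mul_le_mul_of_nonneg_left (h1b.trans (mul_le_mul_of_nonneg_left (by linarith) hγ.le)) hα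
    have b2 : β * (e ⬝ᵥ (Q₂ *ᵥ e)) ≤ β * (γ * (matOpNorm E ^ 2 * (y ⬝ᵥ y))) :=
      mul_le_mul_of_nonneg_left (h2b.trans (mul_le_mul_of_nonneg_left hee hγ.le)) hβ
    have c1 := mul_le_mul_of_nonneg_right (le_max_left
      (hi + 2 * α * γ * matOpNorm D ^ 2 + ρ ^ 2 * CΨ / Δt ^ 2)
      (μ + 2 * α * γ + β * γ * matOpNorm E ^ 2)) hx0
    have c2 := mul_le_mul_of_nonneg_right (le_max_right
      (hi + 2 * α * γ * matOpNorm D ^ 2 + ρ ^ 2 * CΨ / Δt ^ 2)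
      (μ + 2 * α * γ + β * γ * matOpNorm E ^ 2)) hy0
    linarith
end

section
/- Let N ∈ ℕ, let f : ℝ^N → ℝ be differentiable, and let K ⊆ ℝ^N be a set on which ∇f is uniformly continuous. Let c₁ ∈ (0,1), τ ∈ (0,1), and let (x_k) ⊆ K, nonzero directions (d_k) with ∇f(x_k)ᵀd_k < 0, and step lengths s_k > 0 be sequences such that: (a) the Armijo condition holds, f(x_k + s_k d_k) ≤ f(x_k) + c₁ s_k ∇f(x_k)ᵀ d_k; (b) for every k, either s_k = 1, or there exists a failed trial step ŝ_k with s_k ≥ τ ŝ_k, f(x_k + ŝ_k d_k) > f(x_k) + c₁ ŝ_k ∇f(x_k)ᵀ d_k, and x_k + t d_k ∈ K for all t ∈ [0, ŝ_k]; (c) there is a nondecreasing continuous function φ : [0,∞) → [0,∞) with φ(ε) > φ(0) ≥ 0 for all ε > 0 such that ‖d_k‖ ≥ φ((−∇f(x_k)ᵀd_k)/‖d_k‖) for all k. If f(x_k + s_k d_k) − f(x_k) → 0 as k → ∞, then (∇f(x_k)ᵀ d_k)/‖d_k‖ → 0. -/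
open scoped RealInnerProductSpace
open Filter

/-- Feasibility of the Armijo line search with (polynomial)
backtracking: if `∇f` is uniformly continuous on `K`, the iterates stay in `K`,
the Armijo condition holds, every accepted step is either `1` or at least a
fixed fraction `τ` of a rejected trial step whose segment stays in `K`, and the
angle condition with a gauge `φ` holds, then
`f(x_k + s_k d_k) − f(x_k) → 0` implies `⟨∇f(x_k), d_k⟩/‖d_k‖ → 0`. -/
theorem stmt_16 (N : ℕ) (f : EuclideanSpace ℝ (Fin N) → ℝ)
    (hf : Differentiable ℝ f)
    (K : Set (EuclideanSpace ℝ (Fin N)))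
    (hgrad : UniformContinuousOn (fun x => gradient f x) K)
    (c₁ τ : ℝ) (hc₁ : c₁ ∈ Set.Ioo (0 : ℝ) 1) (hτ : τ ∈ Set.Ioo (0 : ℝ) 1)
    (x d : ℕ → EuclideanSpace ℝ (Fin N)) (s : ℕ → ℝ)
    (hxK : ∀ k, x k ∈ K)
    (hd0 : ∀ k, d k ≠ 0)
    (hdesc : ∀ k, ⟪gradient f (x k), d k⟫ < 0)
    (hs : ∀ k, 0 < s k)
    (harmijo : ∀ k, f (x k + s k • d k) ≤ f (x k) + c₁ * s k * ⟪gradient f (x k), d k⟫)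
    (hbacktrack : ∀ k, s k = 1 ∨ ∃ shat : ℝ, 0 < shat ∧ τ * shat ≤ s k ∧
      f (x k) + c₁ * shat * ⟪gradient f (x k), d k⟫ < f (x k + shat • d k) ∧
      ∀ t ∈ Set.Icc (0 : ℝ) shat, x k + t • d k ∈ K)
    (φ : ℝ → ℝ)
    (hφmono : MonotoneOn φ (Set.Ici (0 : ℝ)))
    (hφcont : ContinuousOn φ (Set.Ici (0 : ℝ)))
    (hφ0 : 0 ≤ φ 0)
    (hφpos : ∀ ε : ℝ, 0 < ε → φ 0 < φ ε)
    (hangle : ∀ k, φ ((-⟪gradient f (x k), d k⟫) / ‖d k‖) ≤ ‖d k‖)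
    (hdecr : Tendsto (fun k => f (x k + s k • d k) - f (x k)) atTop (nhds 0)) :
    Tendsto (fun k => ⟪gradient f (x k), d k⟫ / ‖d k‖) atTop (nhds 0) := by
  obtain ⟨hc0, hc1⟩ := hc₁
  obtain ⟨hτ0, hτ1⟩ := hτ
  rw [Metric.tendsto_atTop]
  intro ε hε
  obtain ⟨δ, hδ, hU⟩ := Metric.uniformContinuousOn_iff.1 hgrad ((1 - c₁) * ε)
    (mul_pos (by linarith) hε)
  have hφε : 0 < φ ε := lt_of_le_of_lt hφ0 (hφpos ε hε)
  set m := min (φ ε) (τ * δ) with hm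
  have hmpos : 0 < m := lt_min hφε (mul_pos hτ0 hδ)
  obtain ⟨M, hM⟩ := Metric.tendsto_atTop.1 hdecr (c₁ * m * ε) (by positivity)
  refine ⟨M, fun k hk => ?_⟩
  have hMk := hM k hk
  rw [Real.dist_eq, sub_zero] at hMk ⊢
  have hdk : 0 < ‖d k‖ := norm_pos_iff.2 (hd0 k)
  have hg := hdesc k
  rw [abs_of_neg (div_neg_of_neg_of_pos hg hdk), ← neg_div]
  by_contra hcon
  have ha : ε ≤ (-⟪gradient f (x k), d k⟫) / ‖d k‖ := not_lt.1 hcon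
  have ha2 : ε * ‖d k‖ ≤ -⟪gradient f (x k), d k⟫ := (le_div_iff₀ hdk).1 ha
  have key : m ≤ s k * ‖d k‖ := by
    rcases hbacktrack k with h1 | ⟨sh, hsh, hτs, hfail, hseg⟩
    · rw [h1, one_mul]
      refine (min_le_left _ _).trans (le_trans ?_ (hangle k))
      exact hφmono hε.le (hε.le.trans ha) ha
    · refine (min_le_right _ _).trans ?_
      have hge : δ ≤ sh * ‖d k‖ := by
        by_contra hlt
        push Not at hlt
        have hder : ∀ t : ℝ, HasDerivAt (fun t : ℝ => f (x k + t • d k))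
            ⟪gradient f (x k + t • d k), d k⟫ t := by
          intro t
          have h1 : HasDerivAt (fun t : ℝ => x k + t • d k) (d k) t := by
            simpa using ((hasDerivAt_id t).smul_const (d k)).const_add (x k)
          have h2 := (hf (x k + t • d k)).hasGradientAt.hasFDerivAt.comp_hasDerivAt t h1
          exact h2
        obtain ⟨t, ht, hteq⟩ := exists_hasDerivAt_eq_slope (fun t : ℝ => f (x k + t • d k))
          (fun t => ⟪gradient f (x k + t • d k), d k⟫) hsh
          (fun t _ => (hder t).continuousAt.continuousWithinAt) (fun t _ => hder t)
        simp only [zero_smul, add_zero, sub_zero] at hteq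
        rw [eq_div_iff hsh.ne'] at hteq
        have hlt2 : c₁ * ⟪gradient f (x k), d k⟫ < ⟪gradient f (x k + t • d k), d k⟫ := by
          by_contra hh
          have := mul_le_mul_of_nonneg_right (not_lt.1 hh) hsh.le
          linarith
        have hdist : dist (x k + t • d k) (x k) < δ := by
          rw [dist_eq_norm, add_sub_cancel_left, norm_smul, Real.norm_of_nonneg ht.1.le]
          exact (mul_le_mul_of_nonneg_right ht.2.le hdk.le).trans_lt hlt
        have hu := hU _ (hseg t ⟨ht.1.le, ht.2.le⟩) _ (hxK k) hdist
        rw [dist_eq_norm] at hu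
        have hcs := real_inner_le_norm (gradient f (x k + t • d k) - gradient f (x k)) (d k)
        rw [inner_sub_left] at hcs
        have h3 := mul_lt_mul_of_pos_right hu hdk
        have h4 := mul_le_mul_of_nonneg_left ha2 (by linarith : 0 ≤ 1 - c₁)
        linarith
      have h5 := mul_le_mul_of_nonneg_left hge hτ0.le
      have h6 := mul_le_mul_of_nonneg_right hτs hdk.le
      linarith
  have h7 := harmijo k
  have h8 := (abs_lt.1 hMk).1
  have h9 : c₁ * s k * (ε * ‖d k‖) ≤ c₁ * s k * (-⟪gradient f (x k), d k⟫) :=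
    mul_le_mul_of_nonneg_left ha2 (mul_pos hc0 (hs k)).le
  have h10 : (c₁ * ε) * m ≤ (c₁ * ε) * (s k * ‖d k‖) :=
    mul_le_mul_of_nonneg_left key (by positivity)
  linarith
end
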